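/- arXiv:2209.07532 — 4 statements merged into one kernel-verified Lean document; each statement's English description precedes it below -/
import Mathlib

section
/- In the continuum market model there exists exactly one competitive equilibrium price: there is a unique p* ≥ 0 with d(p*) = s(p*) (equivalently 1 − F(p*) = G(p*)). Moreover 0 < p* < v̄_b, the excess demand satisfies e(p) > 0 for every p with 0 ≤ p < p*, and e(p) < 0 for every p > p*. -/
theorem cdf_lt_aux (v : ℝ) (F : ℝ → ℝ) (hv : 0 < v)
    (h1 : ∀ p : ℝ, v ≤ p → F p = 1) (hm : StrictMonoOn F (Set.Icc 0 v))
    (x y : ℝ) (hx : 0 ≤ x) (hxy : x < y) (hxv : x < v) : F x < F y := by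
  rcases le_total y v with h | h
  · exact hm ⟨hx, hxv.le⟩ ⟨hx.trans hxy.le, h⟩ hxy
  · rw [h1 y h, ← h1 v le_rfl]
    exact hm ⟨hx, hxv.le⟩ ⟨hv.le, le_rfl⟩ hxv

theorem cdf_le_aux (v : ℝ) (F : ℝ → ℝ) (hv : 0 < v)
    (h1 : ∀ p : ℝ, v ≤ p → F p = 1) (hm : StrictMonoOn F (Set.Icc 0 v))
    (x y : ℝ) (hx : 0 ≤ x) (hxy : x < y) : F x ≤ F y := by
  rcases lt_or_ge x v with h | h
  · exact (cdf_lt_aux v F hv h1 hm x y hx hxy h).le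
  · rw [h1 x h, h1 y (h.trans hxy.le)]

/-- In the continuum market model (buyer-valuation CDF `F`,
seller-valuation CDF `G`, demand `d p = 1 - F p`, supply `s p = G p`, excess
demand `e p = 1 - F p - G p`) there exists exactly one competitive equilibrium
price: a unique `pstar ≥ 0` with `1 - F pstar = G pstar`.  Moreover
`0 < pstar < v̄_b`, excess demand is positive for every `0 ≤ p < pstar`, and
negative for every `p > pstar`. -/
theorem unique_competitive_equilibrium
    (vb vs : ℝ) (hvb : 0 < vb) (hvs : 0 < vs)
    (F G : ℝ → ℝ)
    (hFcont : Continuous F) (hGcont : Continuous G)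
    (hFzero : ∀ p : ℝ, p ≤ 0 → F p = 0) (hFone : ∀ p : ℝ, vb ≤ p → F p = 1)
    (hFmono : StrictMonoOn F (Set.Icc 0 vb))
    (hGzero : ∀ p : ℝ, p ≤ 0 → G p = 0) (hGone : ∀ p : ℝ, vs ≤ p → G p = 1)
    (hGmono : StrictMonoOn G (Set.Icc 0 vs)) :
    ∃ pstar : ℝ, 0 ≤ pstar ∧ 1 - F pstar = G pstar ∧
      (∀ p : ℝ, 0 ≤ p → 1 - F p = G p → p = pstar) ∧
      0 < pstar ∧ pstar < vb ∧
      (∀ p : ℝ, 0 ≤ p → p < pstar → 0 < 1 - F p - G p) ∧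
      (∀ p : ℝ, pstar < p → 1 - F p - G p < 0) := by
  have hFlt := cdf_lt_aux vb F hvb hFone hFmono
  have hGle := cdf_le_aux vs G hvs hGone hGmono
  have hG0 := hGzero 0 le_rfl
  have hF0 := hFzero 0 le_rfl
  have hF1 := hFone vb le_rfl
  have hGvb : 0 < G vb := by
    have := cdf_lt_aux vs G hvs hGone hGmono 0 vb le_rfl hvb hvs
    linarith
  have hc : ContinuousOn (fun p => F p + G p) (Set.Icc 0 vb) :=
    (hFcont.add hGcont).continuousOn
  obtain ⟨q, ⟨hq0, hqv⟩, hq⟩ := intermediate_value_Ioo hvb.le hc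
    (show (1 : ℝ) ∈ Set.Ioo (F 0 + G 0) (F vb + G vb) from
      ⟨by linarith, by linarith⟩)
  have hq' : F q + G q = 1 := hq
  have hpos : ∀ p : ℝ, 0 ≤ p → p < q → 0 < 1 - F p - G p := by
    intro p hp hpq
    have h1 := hFlt p q hp hpq (hpq.trans hqv)
    have h2 := hGle p q hp hpq
    linarith
  have hneg : ∀ p : ℝ, q < p → 1 - F p - G p < 0 := by
    intro p hpq
    have h1 := hFlt q p hq0.le hpq hqv
    have h2 := hGle q p hq0.le hpq
    linarith
  refine ⟨q, hq0.le, by linarith, ?_, hq0, hqv, hpos, hneg⟩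
  intro p hp he
  rcases lt_trichotomy p q with h | h | h
  · have := hpos p hp h
    linarith
  · exact h
  · have := hneg p h
    linarith
end

section
/- (Proposition 1) Consider the continuum market model with unique competitive equilibrium price p* (the unique p ≥ 0 with 1 − F(p) = G(p)). Let ε⁻ > 0 and ε⁺ > 0, let T_b : ℝ → ℝ be a measurable function whose restriction to [0, v̄_b] is a CE-preserving transformation (with parameters p*, ε⁻, ε⁺), and let T_s : ℝ → ℝ be a measurable function whose restriction to [0, v̄_s] is a CE-preserving transformation (with parameters p*, ε⁻, ε⁺). Let μ_b and μ_s be probability measures on ℝ whose CDFs are F and G respectively, and define F'(p) = (T_b)_*μ_b((−∞, p]) and G'(p) = (T_s)_*μ_s((−∞, p]). Then p* remains the unique competitive equilibrium price of the transformed market: for every p ≥ 0, 1 − F'(p) = G'(p) if and only if p = p*. -/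
open MeasureTheory

/-- A CE-preserving transformation on `[0, vbar]` (with parameters
`pstar, εm, εp`): a nonnegative-valued map `T` that (1) weakly decreases
valuations below `pstar - εm`, (2) fixes valuations strictly between
`pstar - εm` and `pstar + εp`, and (3) maps valuations at or above
`pstar + εp` into `[pstar + εp, v]`. -/
def CEPreserving (pstar εm εp vbar : ℝ) (T : ℝ → ℝ) : Prop :=
  (∀ v ∈ Set.Icc (0 : ℝ) vbar, 0 ≤ T v) ∧
  (∀ v ∈ Set.Icc (0 : ℝ) vbar, v ≤ pstar - εm → T v ≤ v) ∧
  (∀ v ∈ Set.Icc (0 : ℝ) vbar, pstar - εm < v → v < pstar + εp → T v = v) ∧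
  (∀ v ∈ Set.Icc (0 : ℝ) vbar, pstar + εp ≤ v → pstar + εp ≤ T v ∧ T v ≤ v)

theorem cePreserving_aux (vb : ℝ) (F : ℝ → ℝ)
    (hF0 : ∀ p : ℝ, p ≤ 0 → F p = 0) (hF1 : ∀ p : ℝ, vb ≤ p → F p = 1)
    (pstar εm εp : ℝ) (T : ℝ → ℝ) (hm : Measurable T)
    (hT : CEPreserving pstar εm εp vb T)
    (μ : Measure ℝ) [IsProbabilityMeasure μ]
    (hμ : ∀ p : ℝ, (μ (Set.Iic p)).toReal = F p) :
    (∀ p, F p ≤ (μ.map T (Set.Iic p)).toReal) ∧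
    (∀ p, pstar - εm < p → p < pstar + εp → (μ.map T (Set.Iic p)).toReal = F p) ∧
    (∀ p q, p ≤ q → (μ.map T (Set.Iic p)).toReal ≤ (μ.map T (Set.Iic q)).toReal) ∧
    (∀ p q, p ≤ q → F p ≤ F q) := by
  obtain ⟨h0, h1, h2, h3⟩ := hT
  have hprob : IsProbabilityMeasure (μ.map T) := Measure.isProbabilityMeasure_map hm.aemeasurable
  have ha : ∀ᵐ v ∂μ, v ∈ Set.Icc (0:ℝ) vb := by
    have hz : μ (Set.Iic 0) = 0 := by
      have := (hμ 0).trans (hF0 0 le_rfl)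
      rcases (ENNReal.toReal_eq_zero_iff _).1 this with h | h
      · exact h
      · exact absurd h (measure_ne_top _ _)
    have hi : μ (Set.Iic vb) = 1 := by
      have := (hμ vb).trans (hF1 vb le_rfl)
      exact (ENNReal.toReal_eq_one_iff _).1 this
    have hz' : ∀ᵐ v ∂μ, v ∉ Set.Iic (0:ℝ) := measure_eq_zero_iff_ae_notMem.1 hz
    have hi' : ∀ᵐ v ∂μ, v ∈ Set.Iic vb := (mem_ae_iff_prob_eq_one measurableSet_Iic).2 hi
    filter_upwards [hz', hi'] with v a b
    simp only [Set.mem_Iic, not_le] at a b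
    exact ⟨a.le, b⟩
  have hle : ∀ p, F p ≤ (μ.map T (Set.Iic p)).toReal := by
    intro p
    rw [← hμ p, Measure.map_apply hm measurableSet_Iic]
    refine ENNReal.toReal_mono (measure_ne_top _ _) (measure_mono_ae ?_)
    filter_upwards [ha] with v hv
    intro (hvp : v ≤ p)
    change T v ≤ p
    refine le_trans ?_ hvp
    rcases le_or_gt v (pstar - εm) with h | h
    · exact h1 v hv h
    · rcases lt_or_ge v (pstar + εp) with h' | h'
      · exact (h2 v hv h h').le
      · exact (h3 v hv h').2
  refine ⟨hle, ?_, ?_, ?_⟩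
  · intro p hp hp'
    refine le_antisymm ?_ (hle p)
    rw [← hμ p, Measure.map_apply hm measurableSet_Iic]
    refine ENNReal.toReal_mono (measure_ne_top _ _) (measure_mono_ae ?_)
    filter_upwards [ha] with v hv
    intro (hvp : T v ≤ p)
    change v ≤ p
    rcases le_or_gt v (pstar - εm) with h | h
    · linarith
    · rcases lt_or_ge v (pstar + εp) with h' | h'
      · rw [← h2 v hv h h']; exact hvp
      · linarith [(h3 v hv h').1]
  · intro p q hpq
    exact ENNReal.toReal_mono (measure_ne_top _ _) (measure_mono (Set.Iic_subset_Iic.2 hpq))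
  · intro p q hpq
    rw [← hμ p, ← hμ q]
    exact ENNReal.toReal_mono (measure_ne_top _ _) (measure_mono (Set.Iic_subset_Iic.2 hpq))

/-- **Proposition 1.** In the continuum market model with
unique competitive equilibrium price `pstar`, apply a CE-preserving demand
contraction `Tb` to buyer valuations (distributed by `μb`, with CDF `F`) and a
CE-preserving supply expansion `Ts` to seller valuations (distributed by `μs`,
with CDF `G`).  Then `pstar` remains the unique competitive equilibrium price
of the transformed market: writing `F'` and `G'` for the CDFs of the
pushforward measures, for every `p ≥ 0` one has `1 - F' p = G' p ↔ p = pstar`. -/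
theorem cePreserving_shift_preserves_equilibrium
    (vb vs : ℝ) (hvb : 0 < vb) (hvs : 0 < vs)
    (F G : ℝ → ℝ)
    (hFcont : Continuous F) (hGcont : Continuous G)
    (hFzero : ∀ p : ℝ, p ≤ 0 → F p = 0) (hFone : ∀ p : ℝ, vb ≤ p → F p = 1)
    (hFmono : StrictMonoOn F (Set.Icc 0 vb))
    (hGzero : ∀ p : ℝ, p ≤ 0 → G p = 0) (hGone : ∀ p : ℝ, vs ≤ p → G p = 1)
    (hGmono : StrictMonoOn G (Set.Icc 0 vs))
    (pstar : ℝ) (hps0 : 0 ≤ pstar) (hpseq : 1 - F pstar = G pstar)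
    (hpsuniq : ∀ p : ℝ, 0 ≤ p → 1 - F p = G p → p = pstar)
    (εm εp : ℝ) (hεm : 0 < εm) (hεp : 0 < εp)
    (Tb Ts : ℝ → ℝ) (hTbmeas : Measurable Tb) (hTsmeas : Measurable Ts)
    (hTb : CEPreserving pstar εm εp vb Tb)
    (hTs : CEPreserving pstar εm εp vs Ts)
    (μb μs : Measure ℝ) [IsProbabilityMeasure μb] [IsProbabilityMeasure μs]
    (hμbF : ∀ p : ℝ, (μb (Set.Iic p)).toReal = F p)
    (hμsG : ∀ p : ℝ, (μs (Set.Iic p)).toReal = G p) :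
    ∀ p : ℝ, 0 ≤ p →
      (1 - (μb.map Tb (Set.Iic p)).toReal = (μs.map Ts (Set.Iic p)).toReal ↔
        p = pstar) := by
  obtain ⟨b1, b2, b3, b4⟩ := cePreserving_aux vb F hFzero hFone pstar εm εp Tb hTbmeas hTb μb hμbF
  obtain ⟨s1, s2, s3, s4⟩ := cePreserving_aux vs G hGzero hGone pstar εm εp Ts hTsmeas hTs μs hμsG
  intro p hp
  constructor
  · intro h
    rcases lt_trichotomy p pstar with hlt | heq | hgt
    · exfalso
      obtain ⟨q, hpq, hq1, hq2⟩ : ∃ q, p ≤ q ∧ pstar - εm < q ∧ q < pstar :=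
        ⟨max p (pstar - εm / 2), le_max_left _ _,
          lt_of_lt_of_le (by linarith) (le_max_right _ _), max_lt hlt (by linarith)⟩
      have e1 := b2 q hq1 (by linarith)
      have e2 := s2 q hq1 (by linarith)
      have m1 := b3 p q hpq
      have m2 := s3 p q hpq
      have n1 := b4 q pstar hq2.le
      have n2 := s4 q pstar hq2.le
      exact hq2.ne (hpsuniq q (hp.trans hpq) (by linarith))
    · exact heq
    · exact hpsuniq p hp (by linarith [b1 p, s1 p, b4 pstar p hgt.le, s4 pstar p hgt.le])
  · rintro rfl
    rw [b2 p (by linarith) (by linarith), s2 p (by linarith) (by linarith)]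
    exact hpseq
end

section
/- Let v̄_b > 0 and v̄_s > 0, let F : [0, v̄_b] → [0, 1] and G : [0, v̄_s] → [0, 1] be strictly increasing continuous bijections with F(0) = 0 and G(0) = 0, with inverses F⁻¹ and G⁻¹, and let p* be the unique p with 1 − F(p) = G(p) (where F and G are extended by F = 1 above v̄_b and G = 1 above v̄_s). Suppose T ∈ [0, 1] satisfies: for every i ∈ [0, 1], i ≤ T if and only if F⁻¹(1 − i) ≥ G⁻¹(i). Then F⁻¹(1 − T) = G⁻¹(T) = p*: the final buyer valuation and final seller valuation along the Marshallian trading order both equal the unique competitive equilibrium price. -/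
/-- Let `F : [0, v̄_b] → [0, 1]` and `G : [0, v̄_s] → [0, 1]`
be strictly increasing continuous bijections with `F 0 = 0` and `G 0 = 0`,
with inverses `Finv` and `Ginv`, extended by `F = 1` above `v̄_b` and `G = 1`
above `v̄_s`, and let `pstar` be the unique `p ≥ 0` with `1 - F p = G p`.
If `T ∈ [0, 1]` satisfies, for every `i ∈ [0, 1]`,
`i ≤ T ↔ Finv (1 - i) ≥ Ginv i`, then
`Finv (1 - T) = Ginv T = pstar`: the final buyer and seller valuations along
the Marshallian trading order both equal the unique competitive equilibrium
price. -/
theorem marshallian_final_valuations_eq_equilibrium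
    (vb vs : ℝ) (hvb : 0 < vb) (hvs : 0 < vs)
    (F G Finv Ginv : ℝ → ℝ)
    (hFcont : ContinuousOn F (Set.Icc 0 vb))
    (hFmono : StrictMonoOn F (Set.Icc 0 vb))
    (hFbij : Set.BijOn F (Set.Icc 0 vb) (Set.Icc 0 1))
    (hF0 : F 0 = 0) (hFone : ∀ p : ℝ, vb ≤ p → F p = 1)
    (hFinv : Set.InvOn Finv F (Set.Icc 0 vb) (Set.Icc 0 1))
    (hFinvmaps : Set.MapsTo Finv (Set.Icc 0 1) (Set.Icc 0 vb))
    (hGcont : ContinuousOn G (Set.Icc 0 vs))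
    (hGmono : StrictMonoOn G (Set.Icc 0 vs))
    (hGbij : Set.BijOn G (Set.Icc 0 vs) (Set.Icc 0 1))
    (hG0 : G 0 = 0) (hGone : ∀ p : ℝ, vs ≤ p → G p = 1)
    (hGinv : Set.InvOn Ginv G (Set.Icc 0 vs) (Set.Icc 0 1))
    (hGinvmaps : Set.MapsTo Ginv (Set.Icc 0 1) (Set.Icc 0 vs))
    (pstar : ℝ) (hps0 : 0 ≤ pstar) (hpseq : 1 - F pstar = G pstar)
    (hpsuniq : ∀ p : ℝ, 0 ≤ p → 1 - F p = G p → p = pstar)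
    (T : ℝ) (hT : T ∈ Set.Icc (0 : ℝ) 1)
    (htrade : ∀ i ∈ Set.Icc (0 : ℝ) 1, (i ≤ T ↔ Ginv i ≤ Finv (1 - i))) :
    Finv (1 - T) = pstar ∧ Ginv T = pstar := by
  have hpb : pstar < vb := by
    by_contra h
    push Not at h
    have h1 := hFone pstar h
    have h2 : G pstar = 0 := by linarith
    rcases le_total vs pstar with h3 | h3
    · have := hGone pstar h3
      linarith
    · have := hGmono ⟨le_refl _, hvs.le⟩ ⟨hps0, h3⟩ (by linarith : (0 : ℝ) < pstar)
      linarith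
  have hpv : pstar < vs := by
    by_contra h
    push Not at h
    have h1 := hGone pstar h
    have := hFmono ⟨le_refl _, hvb.le⟩ ⟨hps0, hpb.le⟩ (by linarith : (0 : ℝ) < pstar)
    linarith
  have mb : pstar ∈ Set.Icc 0 vb := ⟨hps0, hpb.le⟩
  have ms : pstar ∈ Set.Icc 0 vs := ⟨hps0, hpv.le⟩
  have hq : G pstar ∈ Set.Icc (0 : ℝ) 1 := hGbij.mapsTo ms
  have e1 : Ginv (G pstar) = pstar := hGinv.1 ms
  have e2 : Finv (1 - G pstar) = pstar := by
    rw [← hpseq, sub_sub_cancel]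
    exact hFinv.1 mb
  have hle : G pstar ≤ T := (htrade _ hq).2 (by rw [e1, e2])
  have hT' : 1 - T ∈ Set.Icc (0 : ℝ) 1 := ⟨by linarith [hT.2], by linarith [hT.1]⟩
  have hge : T ≤ G pstar := by
    by_contra h
    push Not at h
    have h1 := (htrade T hT).1 le_rfl
    have g : G (Ginv T) = T := hGinv.2 hT
    have f : F (Finv (1 - T)) = 1 - T := hFinv.2 hT'
    have a : pstar < Ginv T := by
      by_contra h2
      push Not at h2
      have := hGmono.monotoneOn (hGinvmaps hT) ms h2
      linarith
    have b : Finv (1 - T) < pstar := by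
      by_contra h2
      push Not at h2
      have := hFmono.monotoneOn mb (hFinvmaps hT') h2
      linarith
    linarith
  have e : T = G pstar := le_antisymm hge hle
  rw [e]
  exact ⟨e2, e1⟩
end

section
/- (Proposition 2) Let v̄_b > 0 and v̄_s > 0, let F : [0, v̄_b] → [0, 1] and G : [0, v̄_s] → [0, 1] be strictly increasing continuous bijections with F(0) = 0 and G(0) = 0, with inverses F⁻¹ and G⁻¹, and let p* be the unique p with 1 − F(p) = G(p) (extending F = 1 above v̄_b and G = 1 above v̄_s). Let T ∈ [0, 1] and let v_b, v_s, p : [0, T] → ℝ satisfy: (1) v_b(t) = F⁻¹(1 − t) and v_s(t) = G⁻¹(t) for all t ∈ [0, T]; (2) for every i ∈ [0, 1], i ≤ T if and only if F⁻¹(1 − i) ≥ G⁻¹(i); (3) v_s(t) ≤ p(t) ≤ v_b(t) for all t ∈ [0, T]. Then the final trade occurs at the competitive equilibrium price: p(T) = p*. -/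
/-- **Proposition 2.** Let `F : [0, v̄_b] → [0, 1]` and
`G : [0, v̄_s] → [0, 1]` be strictly increasing continuous bijections with
`F 0 = 0` and `G 0 = 0`, with inverses `Finv` and `Ginv`, extended by `F = 1`
above `v̄_b` and `G = 1` above `v̄_s`, and let `pstar` be the unique `p ≥ 0`
with `1 - F p = G p`.  Suppose `(vB, vS, price)` is a Marshallian path with
final trade time `T ∈ [0, 1]`:
(1) `vB t = Finv (1 - t)` and `vS t = Ginv t` for all `t ∈ [0, T]`;
(2) for every `i ∈ [0, 1]`, `i ≤ T ↔ Finv (1 - i) ≥ Ginv i`;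
(3) `vS t ≤ price t ≤ vB t` for all `t ∈ [0, T]`.
Then the final trade occurs at the competitive equilibrium price:
`price T = pstar`. -/
theorem marshallian_path_final_price_eq_equilibrium
    (vb vs : ℝ) (hvb : 0 < vb) (hvs : 0 < vs)
    (F G Finv Ginv : ℝ → ℝ)
    (hFcont : ContinuousOn F (Set.Icc 0 vb))
    (hFmono : StrictMonoOn F (Set.Icc 0 vb))
    (hFbij : Set.BijOn F (Set.Icc 0 vb) (Set.Icc 0 1))
    (hF0 : F 0 = 0) (hFone : ∀ p : ℝ, vb ≤ p → F p = 1)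
    (hFinv : Set.InvOn Finv F (Set.Icc 0 vb) (Set.Icc 0 1))
    (hFinvmaps : Set.MapsTo Finv (Set.Icc 0 1) (Set.Icc 0 vb))
    (hGcont : ContinuousOn G (Set.Icc 0 vs))
    (hGmono : StrictMonoOn G (Set.Icc 0 vs))
    (hGbij : Set.BijOn G (Set.Icc 0 vs) (Set.Icc 0 1))
    (hG0 : G 0 = 0) (hGone : ∀ p : ℝ, vs ≤ p → G p = 1)
    (hGinv : Set.InvOn Ginv G (Set.Icc 0 vs) (Set.Icc 0 1))
    (hGinvmaps : Set.MapsTo Ginv (Set.Icc 0 1) (Set.Icc 0 vs))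
    (pstar : ℝ) (hps0 : 0 ≤ pstar) (hpseq : 1 - F pstar = G pstar)
    (hpsuniq : ∀ p : ℝ, 0 ≤ p → 1 - F p = G p → p = pstar)
    (T : ℝ) (hT : T ∈ Set.Icc (0 : ℝ) 1)
    (vB vS price : ℝ → ℝ)
    (hpath1 : ∀ t ∈ Set.Icc (0 : ℝ) T, vB t = Finv (1 - t) ∧ vS t = Ginv t)
    (hpath2 : ∀ i ∈ Set.Icc (0 : ℝ) 1, (i ≤ T ↔ Ginv i ≤ Finv (1 - i)))
    (hpath3 : ∀ t ∈ Set.Icc (0 : ℝ) T, vS t ≤ price t ∧ price t ≤ vB t) :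
    price T = pstar := by
  have h01 : (0:ℝ) ∈ Set.Icc 0 vb := ⟨le_rfl, hvb.le⟩
  have h02 : (0:ℝ) ∈ Set.Icc 0 vs := ⟨le_rfl, hvs.le⟩
  have hb : pstar < vb := by
    by_contra! h
    have h1 := hFone pstar h
    have hG : G pstar = 0 := by linarith
    rcases le_or_gt vs pstar with h2 | h2
    · have := hGone pstar h2
      linarith
    · have := hGmono h02 ⟨hps0, h2.le⟩ (by linarith)
      linarith
  have hs : pstar < vs := by
    by_contra! h
    have h1 := hGone pstar h
    have := hFmono h01 ⟨hps0, hb.le⟩ (by linarith)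
    linarith
  have mb : pstar ∈ Set.Icc 0 vb := ⟨hps0, hb.le⟩
  have ms : pstar ∈ Set.Icc 0 vs := ⟨hps0, hs.le⟩
  have e1 : Ginv (G pstar) = pstar := hGinv.1 ms
  have e2 : Finv (1 - G pstar) = pstar := by
    rw [← hpseq, sub_sub_cancel]
    exact hFinv.1 mb
  have hq : G pstar ≤ T := (hpath2 _ (hGbij.mapsTo ms)).2 (by rw [e1, e2])
  have hT' : (1 - T) ∈ Set.Icc (0:ℝ) 1 := ⟨by linarith [hT.2], by linarith [hT.1]⟩
  have hTq : T = G pstar := by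
    refine le_antisymm ?_ hq
    by_contra! hlt
    have h1 := (hpath2 T hT).1 le_rfl
    have h2 : pstar < Ginv T := by
      rw [← hGmono.lt_iff_lt ms (hGinvmaps hT), hGinv.2 hT]
      exact hlt
    have h3 : Finv (1 - T) < pstar := by
      rw [← hFmono.lt_iff_lt (hFinvmaps hT') mb, hFinv.2 hT']
      linarith
    linarith
  have mT : T ∈ Set.Icc (0:ℝ) T := ⟨hT.1, le_rfl⟩
  obtain ⟨h1, h2⟩ := hpath1 T mT
  obtain ⟨h3, h4⟩ := hpath3 T mT
  have h5 : Ginv T = pstar := by rw [hTq, e1]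
  have h6 : Finv (1 - T) = pstar := by rw [hTq, e2]
  linarith
end
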